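/- (Main stability theorem.) Let n, p be positive integers, L, M real n×n matrices, α > 0, and set A := −((L + αM) ⊗ I_p) ∈ ℝ^{np×np}. Let μ := λ_max((A + Aᵀ)/2) and assume μ < 0. Let ḡ ≥ 0, c_r ≥ 0, let e : ℝ → ℝ^{np} and e_L : ℝ → ℝᵖ be continuous with ‖e(t)‖ ≤ √n·ḡ and ‖e_L(t)‖ ≤ ḡ for all t ≥ 0, let x_L : ℝ → ℝᵖ be differentiable with ‖ẋ_L(t)‖ ≤ c_r for all t ≥ 0, and let δ : ℝ → ℝ^{np} be differentiable and satisfy δ̇(t) = A δ(t) + A e(t) + (αM ⊗ I_p)(𝟙_n ⊗ e_L(t)) − 𝟙_n ⊗ ẋ_L(t) for all t ≥ 0. Then for all t ≥ 0, ‖δ(t)‖ ≤ ‖δ(0)‖·e^{μt} + ((√n·‖A‖ + α·‖M·𝟙_n‖)·ḡ + √n·c_r)·(1 − e^{μt})/(−μ), where ‖A‖ is the spectral norm of A and all vector norms are Euclidean. -/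

import Mathlib

open Matrix
open scoped Kronecker

/-- The Euclidean norm of a finitely-indexed real vector. -/
noncomputable def eNorm {ι : Type*} [Fintype ι] (x : ι → ℝ) : ℝ :=
  ‖(EuclideanSpace.equiv ι ℝ).symm x‖

/-- The spectral norm of a real matrix: its operator norm as a linear map between
Euclidean spaces. -/
noncomputable def specNorm {ι κ : Type*} [Fintype ι] [Fintype κ] [DecidableEq κ]
    (A : Matrix ι κ ℝ) : ℝ :=
  ‖LinearMap.toContinuousLinearMap (Matrix.toEuclideanLin A)‖

theorem aux_eNorm_sq {ι : Type*} [Fintype ι] (x : ι → ℝ) : eNorm x ^ 2 = x ⬝ᵥ x := by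
  unfold eNorm
  rw [EuclideanSpace.norm_sq_eq]
  simp [dotProduct, sq]

theorem aux_eNorm_nonneg {ι : Type*} [Fintype ι] (x : ι → ℝ) : 0 ≤ eNorm x := norm_nonneg _

theorem aux_eNorm_add {ι : Type*} [Fintype ι] (x y : ι → ℝ) :
    eNorm (x + y) ≤ eNorm x + eNorm y := by
  unfold eNorm
  rw [map_add]
  exact norm_add_le _ _

theorem aux_eNorm_sub {ι : Type*} [Fintype ι] (x y : ι → ℝ) :
    eNorm (x - y) ≤ eNorm x + eNorm y := by
  unfold eNorm
  rw [map_sub]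
  exact norm_sub_le _ _

theorem aux_dot_le {ι : Type*} [Fintype ι] (x y : ι → ℝ) :
    x ⬝ᵥ y ≤ eNorm x * eNorm y := by
  have h := real_inner_le_norm ((EuclideanSpace.equiv ι ℝ).symm x) ((EuclideanSpace.equiv ι ℝ).symm y)
  refine le_trans (le_of_eq ?_) h
  simp [PiLp.inner_apply, dotProduct, mul_comm]

theorem aux_mulVec {ι κ : Type*} [Fintype ι] [Fintype κ] [DecidableEq κ]
    (A : Matrix ι κ ℝ) (x : κ → ℝ) : eNorm (A *ᵥ x) ≤ specNorm A * eNorm x := by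
  exact (LinearMap.toContinuousLinearMap (Matrix.toEuclideanLin A)).le_opNorm
    ((EuclideanSpace.equiv κ ℝ).symm x)

theorem aux_eNorm_prod {ι κ : Type*} [Fintype ι] [Fintype κ] (a : ι → ℝ) (b : κ → ℝ) :
    eNorm (fun ij : ι × κ => a ij.1 * b ij.2) = eNorm a * eNorm b := by
  rw [← sq_eq_sq₀ (aux_eNorm_nonneg _) (mul_nonneg (aux_eNorm_nonneg _) (aux_eNorm_nonneg _)),
    mul_pow, aux_eNorm_sq, aux_eNorm_sq, aux_eNorm_sq]
  simp only [dotProduct, Fintype.sum_prod_type, Finset.sum_mul_sum]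
  refine Finset.sum_congr rfl fun i _ => Finset.sum_congr rfl fun j _ => by ring

theorem aux_rayleigh {ι : Type*} [Fintype ι] [DecidableEq ι] (S : Matrix ι ι ℝ)
    (h : S.IsHermitian) (x : ι → ℝ) : x ⬝ᵥ (S *ᵥ x) ≤ (⨆ i, h.eigenvalues i) * (x ⬝ᵥ x) := by
  set m := ⨆ i, h.eigenvalues i
  have hps : (m • (1 : Matrix ι ι ℝ) - S).PosSemidef := by
    have hh : (m • (1 : Matrix ι ι ℝ) - S).IsHermitian := by
      refine Matrix.IsHermitian.sub ?_ h
      simp [Matrix.IsHermitian]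
    rw [hh.posSemidef_iff_eigenvalues_nonneg]
    intro i
    have hmem := hh.eigenvalues_mem_spectrum_real i
    generalize hh.eigenvalues i = r at hmem ⊢
    have h2 : m - r ∈ spectrum ℝ S := by
      have := hmem
      rw [← Algebra.algebraMap_eq_smul_one, ← spectrum.singleton_sub_eq] at this
      obtain ⟨a, ha, b, hb, hab⟩ := this
      simp only [Set.mem_singleton_iff] at ha
      subst ha
      have : m - r = b := by rw [← hab]; simp
      rwa [this]
    rw [h.spectrum_real_eq_range_eigenvalues] at h2
    obtain ⟨j, hj⟩ := h2
    have := le_ciSup (Set.finite_range h.eigenvalues).bddAbove j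
    change h.eigenvalues j ≤ m at this
    simp only [Pi.zero_apply]
    linarith
  have := hps.dotProduct_mulVec_nonneg x
  simp [Matrix.sub_mulVec, Matrix.smul_mulVec, dotProduct_sub] at this
  linarith

theorem aux_lognorm {ι : Type*} [Fintype ι] [DecidableEq ι] (A : Matrix ι ι ℝ)
    (h : (((1 : ℝ) / 2) • (A + Aᵀ)).IsHermitian) (x : ι → ℝ) :
    x ⬝ᵥ (A *ᵥ x) ≤ (⨆ i, h.eigenvalues i) * (x ⬝ᵥ x) := by
  refine le_trans (le_of_eq ?_) (aux_rayleigh _ h x)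
  have : x ⬝ᵥ (Aᵀ *ᵥ x) = x ⬝ᵥ (A *ᵥ x) := by
    rw [Matrix.mulVec_transpose, dotProduct_comm, ← Matrix.dotProduct_mulVec]
  rw [Matrix.smul_mulVec, Matrix.add_mulVec, dotProduct_smul, dotProduct_add, this, smul_eq_mul]
  ring

theorem aux_ode {ι : Type*} [Fintype ι] (δ : ℝ → ι → ℝ) (hδ : Differentiable ℝ δ)
    (μ C : ℝ) (hμ : μ < 0) (hC : 0 ≤ C)
    (h : ∀ t, 0 ≤ t → δ t ⬝ᵥ deriv δ t ≤ μ * eNorm (δ t) ^ 2 + C * eNorm (δ t))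
    (t : ℝ) (ht : 0 ≤ t) :
    eNorm (δ t) ≤ eNorm (δ 0) * Real.exp (μ * t) + C * ((1 - Real.exp (μ * t)) / (-μ)) := by
  have key : ∀ ε : ℝ, 0 < ε → eNorm (δ t) ≤ (eNorm (δ 0) + ε) * Real.exp (μ * t)
      + (C + ε) * ((1 - Real.exp (μ * t)) / (-μ)) := by
    intro ε hε
    let b : ℝ → ℝ := fun s => (eNorm (δ 0) + ε) * Real.exp (μ * s)
      + (C + ε) * ((1 - Real.exp (μ * s)) / (-μ))
    have hb : ∀ s, HasDerivAt b (μ * b s + (C + ε)) s := by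
      intro s
      have h1 : HasDerivAt (fun s => Real.exp (μ * s)) (Real.exp (μ * s) * (μ * 1)) s :=
        ((hasDerivAt_id s).const_mul μ).exp
      have h2 := (h1.const_mul (eNorm (δ 0) + ε)).add
        (((h1.const_sub 1).div_const (-μ)).const_mul (C + ε))
      refine h2.congr_deriv ?_
      simp only [b]
      have := hμ.ne
      field_simp
      ring
    have hbpos : ∀ s, 0 ≤ s → 0 < b s := by
      intro s hs
      have h0 := aux_eNorm_nonneg (δ 0)
      have h1 : Real.exp (μ * s) ≤ 1 := Real.exp_le_one_iff.2 (by nlinarith)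
      have h2 : 0 ≤ (1 - Real.exp (μ * s)) / (-μ) := div_nonneg (by linarith) (by linarith)
      have h3 := Real.exp_pos (μ * s)
      simp only [b]
      positivity
    have hf : ∀ s, HasDerivAt (fun s => δ s ⬝ᵥ δ s) (2 * (δ s ⬝ᵥ deriv δ s)) s := by
      intro s
      have h1 := hasDerivAt_pi.1 (hδ s).hasDerivAt
      have h2 := HasDerivAt.fun_sum (u := Finset.univ) fun i _ => (h1 i).mul (h1 i)
      refine h2.congr_deriv ?_
      simp only [dotProduct, Finset.mul_sum]
      refine Finset.sum_congr rfl fun i _ => by ring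
    have hB : ∀ s, HasDerivAt (fun s => b s ^ 2) (2 * b s * (μ * b s + (C + ε))) s := by
      intro s
      exact ((hb s).fun_pow 2).congr_deriv (by simp)
    have := image_le_of_deriv_right_lt_deriv_boundary (a := 0) (b := t)
      (f := fun s => δ s ⬝ᵥ δ s) (f' := fun s => 2 * (δ s ⬝ᵥ deriv δ s))
      (B := fun s => b s ^ 2) (B' := fun s => 2 * b s * (μ * b s + (C + ε)))
      (fun s _ => (hf s).continuousAt.continuousWithinAt)
      (fun s _ => (hf s).hasDerivWithinAt)
      (by
        have h0 := aux_eNorm_nonneg (δ 0)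
        rw [← aux_eNorm_sq]
        simp only [b, mul_zero, Real.exp_zero, sub_self, zero_div, add_zero, mul_one]
        nlinarith)
      hB
      (by
        intro s hs heq
        have h1 := hbpos s hs.1
        have h2 : eNorm (δ s) = b s := by
          rw [← sq_eq_sq₀ (aux_eNorm_nonneg _) h1.le, aux_eNorm_sq]
          exact heq
        have h3 := h s hs.1
        rw [h2] at h3
        have := mul_pos h1 hε
        nlinarith)
      (Set.right_mem_Icc.2 ht)
    rw [← aux_eNorm_sq] at this
    exact (sq_le_sq₀ (aux_eNorm_nonneg _) (hbpos t ht).le).1 this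
  set E := Real.exp (μ * t)
  have hE : E ≤ 1 := Real.exp_le_one_iff.2 (by nlinarith)
  have hE0 : 0 < E := Real.exp_pos _
  have h2 : 0 ≤ (1 - E) / (-μ) := div_nonneg (by linarith) (by linarith)
  set F := (1 - E) / (-μ)
  refine le_of_forall_pos_le_add fun ε hε => ?_
  have := key (ε / (E + F)) (by positivity)
  refine this.trans (le_of_eq ?_)
  have : E + F ≠ 0 := by positivity
  field_simp
  ring

/-- **Main stability theorem for the event-triggered consensus controller.**
Let `A = -((L + α M) ⊗ I_p)` with logarithmic norm `μ = λ_max ((A + Aᵀ)/2) < 0`.  If the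
stacked sampling error `e` is bounded by `√n ⬝ ḡ`, the leader sampling error `e_L` by `ḡ`,
the leader velocity `ẋ_L` by `c_r`, and the disagreement `δ` satisfies the closed-loop
dynamics `δ̇ = A δ + A e + (α M ⊗ I_p)(𝟙ₙ ⊗ e_L) - 𝟙ₙ ⊗ ẋ_L` for `t ≥ 0`, then for all
`t ≥ 0`,
`‖δ t‖ ≤ ‖δ 0‖ e^{μ t} + ((√n ‖A‖ + α ‖M 𝟙ₙ‖) ḡ + √n c_r) (1 - e^{μ t}) / (-μ)`. -/
theorem event_triggered_consensus_stability
    (n p : ℕ) (hn : 0 < n) (hp : 0 < p)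
    (L M : Matrix (Fin n) (Fin n) ℝ) (α : ℝ) (hα : 0 < α)
    (A : Matrix (Fin n × Fin p) (Fin n × Fin p) ℝ)
    (hA : A = -((L + α • M) ⊗ₖ (1 : Matrix (Fin p) (Fin p) ℝ)))
    (hsym : (((1 : ℝ) / 2) • (A + Aᵀ)).IsHermitian)
    (μ : ℝ) (hμ : μ = ⨆ i, hsym.eigenvalues i) (hμneg : μ < 0)
    (g cr : ℝ) (hg : 0 ≤ g) (hcr : 0 ≤ cr)
    (e : ℝ → (Fin n × Fin p → ℝ)) (eL : ℝ → (Fin p → ℝ))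
    (he_cont : Continuous e) (heL_cont : Continuous eL)
    (he : ∀ t, 0 ≤ t → eNorm (e t) ≤ Real.sqrt n * g)
    (heL : ∀ t, 0 ≤ t → eNorm (eL t) ≤ g)
    (xL : ℝ → (Fin p → ℝ)) (hxL : Differentiable ℝ xL)
    (hxL' : ∀ t, 0 ≤ t → eNorm (deriv xL t) ≤ cr)
    (δ : ℝ → (Fin n × Fin p → ℝ)) (hδ : Differentiable ℝ δ)
    (hode : ∀ t, 0 ≤ t → deriv δ t =
      A.mulVec (δ t) + A.mulVec (e t)
        + ((α • M) ⊗ₖ (1 : Matrix (Fin p) (Fin p) ℝ)).mulVec (fun ij => eL t ij.2)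
        - fun ij => deriv xL t ij.2)
    (t : ℝ) (ht : 0 ≤ t) :
    eNorm (δ t) ≤ eNorm (δ 0) * Real.exp (μ * t)
      + ((Real.sqrt n * specNorm A + α * eNorm (M.mulVec fun _ => (1 : ℝ))) * g
          + Real.sqrt n * cr) * ((1 - Real.exp (μ * t)) / (-μ)) := by
  have hsn := Real.sqrt_nonneg (n : ℝ)
  have hM0 := aux_eNorm_nonneg (M.mulVec fun _ => (1 : ℝ))
  have hS0 : 0 ≤ specNorm A := norm_nonneg _
  refine aux_ode δ hδ μ _ hμneg (by positivity) ?_ t ht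
  intro s hs
  have hone : eNorm (fun _ : Fin n => (1 : ℝ)) = Real.sqrt n := by
    simp [eNorm, EuclideanSpace.norm_eq]
  have hx : eNorm (fun ij : Fin n × Fin p => deriv xL s ij.2) ≤ Real.sqrt n * cr := by
    have := aux_eNorm_prod (fun _ : Fin n => (1 : ℝ)) (deriv xL s)
    simp only [one_mul] at this
    rw [this, hone]
    exact mul_le_mul_of_nonneg_left (hxL' s hs) hsn
  have hk : ((α • M) ⊗ₖ (1 : Matrix (Fin p) (Fin p) ℝ)).mulVec
      (fun ij : Fin n × Fin p => eL s ij.2)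
      = fun ij : Fin n × Fin p => (M.mulVec fun _ => (1 : ℝ)) ij.1 * (α • eL s) ij.2 := by
    funext ij
    simp only [Matrix.mulVec, dotProduct, Fintype.sum_prod_type, Matrix.kroneckerMap_apply,
      Matrix.one_apply, Matrix.smul_apply, Pi.smul_apply, smul_eq_mul, Finset.sum_mul]
    refine Finset.sum_congr rfl fun i _ => ?_
    simp
    ring
  have hsm : eNorm (α • eL s) = α * eNorm (eL s) := by
    unfold eNorm
    rw [map_smul, norm_smul, Real.norm_of_nonneg hα.le]
  have h2 : eNorm (((α • M) ⊗ₖ (1 : Matrix (Fin p) (Fin p) ℝ)).mulVec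
      (fun ij : Fin n × Fin p => eL s ij.2))
      ≤ α * eNorm (M.mulVec fun _ => (1 : ℝ)) * g := by
    rw [hk, aux_eNorm_prod, hsm]
    have := mul_le_mul_of_nonneg_left (heL s hs) (mul_nonneg hα.le hM0)
    linarith
  have h1 : eNorm (A.mulVec (e s)) ≤ Real.sqrt n * specNorm A * g := by
    have := (aux_mulVec A (e s)).trans (mul_le_mul_of_nonneg_left (he s hs) hS0)
    linarith
  rw [hode s hs, add_assoc, add_sub_assoc, dotProduct_add, aux_eNorm_sq]
  have h0 := aux_lognorm A hsym (δ s)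
  rw [← hμ] at h0
  refine add_le_add h0 ((aux_dot_le _ _).trans ?_)
  rw [mul_comm]
  refine mul_le_mul_of_nonneg_right ?_ (aux_eNorm_nonneg _)
  refine (aux_eNorm_sub _ _).trans ?_
  have := aux_eNorm_add (A.mulVec (e s)) (((α • M) ⊗ₖ (1 : Matrix (Fin p) (Fin p) ℝ)).mulVec
      (fun ij : Fin n × Fin p => eL s ij.2))
  linarith
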